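/- arXiv:1004.2079 — 4 statements merged into one kernel-verified Lean document; each statement's English description precedes it below -/
import Mathlib

section
/- The update operator T of the natural bargaining dynamics is nonexpansive in the sup norm: for any exchange network with edge weights bounded by W, and any two message vectors α, β ∈ [0,W]^{2|E|}, one has ‖Tα − Tβ‖_∞ ≤ ‖α − β‖_∞, where ‖·‖_∞ is the maximum over directed edges of the absolute coordinate difference. -/
namespace EN

open Finset

variable {V : Type*}

/-- The nonnegative part `(x)₊ = max (x, 0)`. -/
noncomputable def pos (x : ℝ) : ℝ := max x 0

variable [Fintype V] [DecidableEq V]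

/-- The maximum of `f` over a finite set of vertices (`0` over the empty set). -/
noncomputable def fmax (s : Finset V) (f : V → ℝ) : ℝ := ⨆ k ∈ s, f k

/-- The offer from `i` to `j` given messages `α` and weights `w`:
`m_{i→j} = (w_{ij} − α_{i\j})₊ − (1/2) (w_{ij} − α_{i\j} − α_{j\i})₊`. -/
noncomputable def offer (w α : V → V → ℝ) (i j : V) : ℝ :=
  pos (w i j - α i j) - (1 / 2) * pos (w i j - α i j - α j i)

/-- The update operator `T` of the natural dynamics:
`(Tα)_{i\j} = max_{k ∈ ∂i \ j} m_{k→i}`. -/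
noncomputable def upd (G : SimpleGraph V) [DecidableRel G.Adj] (w α : V → V → ℝ)
    (i j : V) : ℝ :=
  fmax ((G.neighborFinset i).erase j) fun k => offer w α k i

/-- The earnings estimate `γ_i = max_{k ∈ ∂i} m_{k→i}`. -/
noncomputable def earn (G : SimpleGraph V) [DecidableRel G.Adj] (w α : V → V → ℝ)
    (i : V) : ℝ :=
  fmax (G.neighborFinset i) fun k => offer w α k i

/-- Exchange network weights: symmetric and positive on every edge. -/
def GoodW (G : SimpleGraph V) (w : V → V → ℝ) : Prop :=
  (∀ i j, w i j = w j i) ∧ ∀ i j, G.Adj i j → 0 < w i j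

/-- A valid message vector: nonnegative on all directed edges. -/
def ValidMsg (G : SimpleGraph V) (α : V → V → ℝ) : Prop :=
  ∀ i j, G.Adj i j → 0 ≤ α i j

/-- Fixed point of the natural-dynamics update operator. -/
def IsFixedPt (G : SimpleGraph V) [DecidableRel G.Adj] (w α : V → V → ℝ) : Prop :=
  ∀ i j, G.Adj i j → upd G w α i j = α i j

/-- `ε`-fixed point. -/
def IsEpsFixedPt (G : SimpleGraph V) [DecidableRel G.Adj] (w α : V → V → ℝ) (ε : ℝ) : Prop :=
  ∀ i j, G.Adj i j → |α i j - upd G w α i j| ≤ ε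

/-- The natural dynamics with damping factor `κ`: `α^{t+1} = (1−κ) α^t + κ T α^t`. -/
noncomputable def dyn (G : SimpleGraph V) [DecidableRel G.Adj] (w : V → V → ℝ) (κ : ℝ)
    (α0 : V → V → ℝ) : ℕ → V → V → ℝ
  | 0 => α0
  | t + 1 => fun i j =>
      (1 - κ) * dyn G w κ α0 t i j + κ * upd G w (dyn G w κ α0 t) i j

/-- Sup norm over directed edges. -/
noncomputable def msgSup (G : SimpleGraph V) [DecidableRel G.Adj] (f : V → V → ℝ) : ℝ :=
  ⨆ p : V × V, if G.Adj p.1 p.2 then |f p.1 p.2| else 0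

/-- `M` is a matching of `G`: a symmetric subrelation of adjacency pairing each node
with at most one partner. -/
structure IsMatching (G : SimpleGraph V) (M : V → V → Prop) : Prop where
  subset : ∀ i j, M i j → G.Adj i j
  symm : ∀ i j, M i j → M j i
  unique : ∀ i j k, M i j → M i k → j = k

/-- `(M, γ)` is a trade outcome. -/
def IsOutcome (G : SimpleGraph V) (w : V → V → ℝ) (M : V → V → Prop) (γ : V → ℝ) : Prop :=
  IsMatching G M ∧ (∀ i, 0 ≤ γ i) ∧ (∀ i j, M i j → γ i + γ j = w i j) ∧
    ∀ i, (∀ j, ¬M i j) → γ i = 0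

/-- Stability of an outcome. -/
def Stable (G : SimpleGraph V) (w : V → V → ℝ) (M : V → V → Prop) (γ : V → ℝ) : Prop :=
  ∀ i j, G.Adj i j → ¬M i j → w i j ≤ γ i + γ j

/-- The best alternative of `i` excluding `j`: `max_{k ∈ ∂i \ j} (w_{ik} − γ_k)₊`. -/
noncomputable def bestAlt (G : SimpleGraph V) [DecidableRel G.Adj] (w : V → V → ℝ)
    (γ : V → ℝ) (i j : V) : ℝ :=
  fmax ((G.neighborFinset i).erase j) fun k => pos (w i k - γ k)

/-- Balance of an outcome. -/
def Balanced (G : SimpleGraph V) [DecidableRel G.Adj] (w : V → V → ℝ) (M : V → V → Prop)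
    (γ : V → ℝ) : Prop :=
  ∀ i j, M i j → γ i - bestAlt G w γ i j = γ j - bestAlt G w γ j i

/-- Nash bargaining solution: a stable and balanced trade outcome. -/
def IsNBSolution (G : SimpleGraph V) [DecidableRel G.Adj] (w : V → V → ℝ)
    (M : V → V → Prop) (γ : V → ℝ) : Prop :=
  IsOutcome G w M γ ∧ Stable G w M γ ∧ Balanced G w M γ

/-- `ε`-balance. -/
def EpsBalanced (G : SimpleGraph V) [DecidableRel G.Adj] (w : V → V → ℝ)
    (M : V → V → Prop) (γ : V → ℝ) (ε : ℝ) : Prop :=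
  ∀ i j, M i j → |(γ i - bestAlt G w γ i j) - (γ j - bestAlt G w γ j i)| ≤ ε

/-- `ε`-Nash bargaining solution. -/
def IsEpsNB (G : SimpleGraph V) [DecidableRel G.Adj] (w : V → V → ℝ)
    (M : V → V → Prop) (γ : V → ℝ) (ε : ℝ) : Prop :=
  IsOutcome G w M γ ∧ Stable G w M γ ∧ EpsBalanced G w M γ ε

/-- Feasible point of the LP relaxation of maximum weight matching. -/
def LPFeasible (G : SimpleGraph V) [DecidableRel G.Adj] (x : V → V → ℝ) : Prop :=
  (∀ i j, x i j = x j i) ∧ (∀ i j, 0 ≤ x i j) ∧ (∀ i j, ¬G.Adj i j → x i j = 0) ∧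
    ∀ i, ∑ j ∈ G.neighborFinset i, x i j ≤ 1

/-- LP objective `Σ_{(i,j)∈E} w_{ij} x_{ij}` (each undirected edge counted once). -/
noncomputable def LPval (G : SimpleGraph V) [DecidableRel G.Adj] (w x : V → V → ℝ) : ℝ :=
  (1 / 2) * ∑ i, ∑ j ∈ G.neighborFinset i, w i j * x i j

/-- Optimal point of the LP relaxation of maximum weight matching. -/
def LPOptimal (G : SimpleGraph V) [DecidableRel G.Adj] (w x : V → V → ℝ) : Prop :=
  LPFeasible G x ∧ ∀ y, LPFeasible G y → LPval G w y ≤ LPval G w x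

def Integral (x : V → V → ℝ) : Prop := ∀ i j, x i j = 0 ∨ x i j = 1

def HalfIntegral (x : V → V → ℝ) : Prop := ∀ i j, x i j = 0 ∨ x i j = 1 / 2 ∨ x i j = 1

open Classical in
/-- The LP point associated to a matching. -/
noncomputable def mInd (M : V → V → Prop) (i j : V) : ℝ := if M i j then 1 else 0

/-- The state with offers `m` induces the matching `M`: every node receiving a positive
offer is matched and receives its unique best offer from its partner, and every node
with zero earnings is unmatched. -/
def Induces (G : SimpleGraph V) [DecidableRel G.Adj] (m : V → V → ℝ)
    (M : V → V → Prop) : Prop :=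
  IsMatching G M ∧
    (∀ i, (∃ k, G.Adj i k ∧ 0 < m k i) →
      ∃ j, M i j ∧ ∀ k, G.Adj i k → k ≠ j → m k i < m j i) ∧
    ∀ i, (fmax (G.neighborFinset i) fun k => m k i) = 0 → ∀ j, ¬M i j

/-- Feasibility for the dual LP. -/
def DualFeasible (G : SimpleGraph V) (w : V → V → ℝ) (y : V → ℝ) : Prop :=
  (∀ i, 0 ≤ y i) ∧ ∀ i j, G.Adj i j → w i j ≤ y i + y j

/-- Optimality for the dual LP. -/
def DualOptimal (G : SimpleGraph V) (w : V → V → ℝ) (y : V → ℝ) : Prop :=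
  DualFeasible G w y ∧ ∀ z, DualFeasible G w z → ∑ i, y i ≤ ∑ i, z i

/-- The unmatched balance property at every edge. -/
def UnmatchedBalance (G : SimpleGraph V) [DecidableRel G.Adj] (w : V → V → ℝ)
    (y : V → ℝ) : Prop :=
  ∀ i j, G.Adj i j → y i - bestAlt G w y i j = y j - bestAlt G w y j i

/-! ### Unequal division -/

/-- Valid split fractions: `r_{ij} ∈ (0,1)` with `r_{ij} + r_{ji} = 1` on every edge. -/
def GoodR (G : SimpleGraph V) (r : V → V → ℝ) : Prop :=
  ∀ i j, G.Adj i j → 0 < r i j ∧ r i j < 1 ∧ r i j + r j i = 1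

/-- The UD offer from `i` to `j`. -/
noncomputable def offerUD (w r α : V → V → ℝ) (i j : V) : ℝ :=
  pos (w i j - α i j) - r i j * pos (w i j - α i j - α j i)

/-- The UD update operator. -/
noncomputable def updUD (G : SimpleGraph V) [DecidableRel G.Adj] (w r α : V → V → ℝ)
    (i j : V) : ℝ :=
  fmax ((G.neighborFinset i).erase j) fun k => offerUD w r α k i

/-- The UD earnings estimate. -/
noncomputable def earnUD (G : SimpleGraph V) [DecidableRel G.Adj] (w r α : V → V → ℝ)
    (i : V) : ℝ :=
  fmax (G.neighborFinset i) fun k => offerUD w r α k i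

/-- Fixed point of the UD update operator. -/
def IsFixedPtUD (G : SimpleGraph V) [DecidableRel G.Adj] (w r α : V → V → ℝ) : Prop :=
  ∀ i j, G.Adj i j → updUD G w r α i j = α i j

/-- Correct division. -/
def CorrectDiv (G : SimpleGraph V) [DecidableRel G.Adj] (w r : V → V → ℝ)
    (M : V → V → Prop) (γ : V → ℝ) : Prop :=
  ∀ i j, M i j →
    (1 / r i j) * (γ i - bestAlt G w γ i j) = (1 / r j i) * (γ j - bestAlt G w γ j i)

/-- UD solution: a stable trade outcome satisfying correct division. -/
def IsUDSolution (G : SimpleGraph V) [DecidableRel G.Adj] (w r : V → V → ℝ)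
    (M : V → V → Prop) (γ : V → ℝ) : Prop :=
  IsOutcome G w M γ ∧ Stable G w M γ ∧ CorrectDiv G w r M γ

/-- Edge surplus. -/
noncomputable def surp (G : SimpleGraph V) [DecidableRel G.Adj] (w : V → V → ℝ)
    (γ : V → ℝ) (i j : V) : ℝ :=
  w i j - bestAlt G w γ i j - bestAlt G w γ j i

open Classical in
/-- The rebalanced allocation `γ^reb`. -/
noncomputable def reb (G : SimpleGraph V) [DecidableRel G.Adj] (w r : V → V → ℝ)
    (M : V → V → Prop) (γ : V → ℝ) (i : V) : ℝ :=
  if h : ∃ j, M i j then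
    bestAlt G w γ i h.choose + r i h.choose * surp G w γ i h.choose
  else 0

/-- The Edge Rebalancing iteration `γ^{t+1} = κ γ^reb(γ^t) + (1−κ) γ^t`. -/
noncomputable def rebIter (G : SimpleGraph V) [DecidableRel G.Adj] (w r : V → V → ℝ)
    (M : V → V → Prop) (κ : ℝ) (γ0 : V → ℝ) : ℕ → V → ℝ
  | 0 => γ0
  | t + 1 => fun i =>
      κ * reb G w r M (rebIter G w r M κ γ0 t) i + (1 - κ) * rebIter G w r M κ γ0 t i

theorem offer_aux (w x y x' y' D : ℝ) (hy : 0 ≤ y) (hy' : 0 ≤ y')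
    (hx : |x - x'| ≤ D) (hyD : |y - y'| ≤ D) :
    pos (w - x) - (1 / 2) * pos (w - x - y) ≤
      pos (w - x') - (1 / 2) * pos (w - x' - y') + D := by
  rw [abs_le] at hx hyD
  obtain ⟨h1, h2⟩ := hx
  obtain ⟨h3, h4⟩ := hyD
  unfold pos
  rcases max_cases (w - x) 0 with ⟨e1, h5⟩ | ⟨e1, h5⟩ <;>
  rcases max_cases (w - x - y) 0 with ⟨e2, h6⟩ | ⟨e2, h6⟩ <;>
  rcases max_cases (w - x') 0 with ⟨e3, h7⟩ | ⟨e3, h7⟩ <;>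
  rcases max_cases (w - x' - y') 0 with ⟨e4, h8⟩ | ⟨e4, h8⟩ <;>
  rw [e1, e2, e3, e4] <;> linarith

theorem fmax_aux {V : Type*} [Fintype V] [Nonempty V] (s : Finset V) (f g : V → ℝ) (D : ℝ)
    (hD : 0 ≤ D) (h : ∀ k ∈ s, f k ≤ g k + D) : fmax s f ≤ fmax s g + D := by
  unfold fmax
  refine ciSup_le fun k => ?_
  have hb : (⨆ (_ : k ∈ s), g k) ≤ ⨆ k, ⨆ (_ : k ∈ s), g k :=
    le_ciSup (f := fun k => ⨆ (_ : k ∈ s), g k) (Set.finite_range _).bddAbove k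
  by_cases hk : k ∈ s
  · have := h k hk
    simp only [hk, ciSup_unique] at hb ⊢
    linarith
  · simp only [hk, Real.iSup_of_isEmpty] at hb ⊢
    linarith

/-- The update operator `T` of the natural bargaining dynamics is
nonexpansive in the sup norm over directed edges. -/
theorem update_nonexpansive
    {V : Type*} [Fintype V] [DecidableEq V] (G : SimpleGraph V) [DecidableRel G.Adj]
    (w : V → V → ℝ) (hw : GoodW G w) (W : ℝ)
    (hwW : ∀ i j, G.Adj i j → w i j ≤ W)
    (α β : V → V → ℝ)
    (hα : ∀ i j, G.Adj i j → α i j ∈ Set.Icc (0 : ℝ) W)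
    (hβ : ∀ i j, G.Adj i j → β i j ∈ Set.Icc (0 : ℝ) W) :
    msgSup G (fun i j => upd G w α i j - upd G w β i j) ≤
      msgSup G (fun i j => α i j - β i j) := by
  have hD : 0 ≤ msgSup G (fun i j => α i j - β i j) := by
    unfold msgSup
    refine Real.iSup_nonneg fun p => ?_
    split_ifs
    · exact abs_nonneg _
    · exact le_rfl
  have hle : ∀ i j, G.Adj i j → |α i j - β i j| ≤ msgSup G (fun i j => α i j - β i j) := by
    intro i j hij
    have := le_ciSup (f := fun p : V × V => if G.Adj p.1 p.2 then |α p.1 p.2 - β p.1 p.2| else 0)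
      (Set.finite_range _).bddAbove (i, j)
    simp only [hij, if_true] at this
    exact this
  generalize msgSup G (fun i j => α i j - β i j) = D at hD hle
  unfold msgSup
  refine Real.iSup_le (fun p => ?_) hD
  split_ifs with hp
  · haveI : Nonempty V := ⟨p.1⟩
    have hadj : ∀ k ∈ (G.neighborFinset p.1).erase p.2, G.Adj k p.1 := by
      intro k hk
      rw [Finset.mem_erase, SimpleGraph.mem_neighborFinset] at hk
      exact hk.2.symm
    have h1 : upd G w α p.1 p.2 ≤ upd G w β p.1 p.2 + D := by
      refine fmax_aux _ _ _ D hD fun k hk => ?_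
      have ha := hadj k hk
      exact offer_aux _ _ _ _ _ D (hα _ _ ha.symm).1 (hβ _ _ ha.symm).1 (hle _ _ ha)
        (hle _ _ ha.symm)
    have h2 : upd G w β p.1 p.2 ≤ upd G w α p.1 p.2 + D := by
      refine fmax_aux _ _ _ D hD fun k hk => ?_
      have ha := hadj k hk
      exact offer_aux _ _ _ _ _ D (hβ _ _ ha.symm).1 (hα _ _ ha.symm).1
        (by rw [abs_sub_comm]; exact hle _ _ ha) (by rw [abs_sub_comm]; exact hle _ _ ha.symm)
    rw [abs_le]
    constructor <;> linarith
  · exact hD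
end EN
end

section
/- For any exchange network and any damping factor κ∈(0,1), the natural dynamics α^{t+1} = (1−κ)α^t + κTα^t has at least one fixed point (a message vector α with Tα = α); moreover, for any initial condition α^0 ∈ [0,W]^{2|E|}, where W is the maximum edge weight, the sequence α^t converges to a fixed point of T. -/
namespace EN

open Finset

variable {V : Type*}

variable [Fintype V] [DecidableEq V]

section KM
open Filter Topology

variable {E : Type*} [NormedAddCommGroup E] [NormedSpace ℝ E]

/-- Goebel-Kirk inequality. -/
theorem goebel_kirk (κ : ℝ) (h0 : 0 < κ) (h1 : κ < 1) (x y : ℕ → E)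
    (hx : ∀ n, x (n + 1) = (1 - κ) • x n + κ • y n)
    (hy : ∀ m n, ‖y m - y n‖ ≤ ‖x m - x n‖)
    (hd : ∀ n, ‖y (n + 1) - x (n + 1)‖ ≤ ‖y n - x n‖) (n : ℕ) :
    ∀ i, (1 + n * κ) * ‖y i - x i‖ ≤ ‖y (i + n) - x i‖ +
      ((1 - κ)⁻¹) ^ n * (‖y i - x i‖ - ‖y (i + n) - x (i + n)‖) := by
  have hstep : ∀ k, x (k + 1) - x k = κ • (y k - x k) := by
    intro k; rw [hx]; module
  have hanti : Antitone (fun n => ‖y n - x n‖) := antitone_nat_of_succ_le hd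
  have hdist : ∀ i m, ‖x (i + m) - x i‖ ≤ κ * m * ‖y i - x i‖ := by
    intro i m
    induction m with
    | zero => simp
    | succ m ih =>
      have e : x (i + (m + 1)) - x i = κ • (y (i + m) - x (i + m)) + (x (i + m) - x i) := by
        rw [← hstep, ← add_assoc]; abel
      rw [e]
      refine (norm_add_le _ _).trans ?_
      rw [norm_smul, Real.norm_of_nonneg h0.le]
      have := mul_le_mul_of_nonneg_left (hanti (Nat.le_add_right i m)) h0.le
      push_cast
      simp only at this
      nlinarith
  induction n with
  | zero => intro i; simp
  | succ n ih =>
    intro i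
    have hi := ih (i + 1)
    have e1 : i + 1 + n = i + (n + 1) := by omega
    rw [e1] at hi
    set D := ‖y (i + (n + 1)) - x (i + (n + 1))‖
    set q := ((1 - κ)⁻¹) ^ n with hq
    have hk : 0 < 1 - κ := by linarith
    have h2 : ‖y (i + (n + 1)) - x (i + 1)‖ ≤
        (1 - κ) * ‖y (i + (n + 1)) - x i‖ + κ * (κ * (n + 1 : ℕ) * ‖y i - x i‖) := by
      have e : y (i + (n + 1)) - x (i + 1) =
          (1 - κ) • (y (i + (n + 1)) - x i) + κ • (y (i + (n + 1)) - y i) := by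
        rw [hx]; module
      rw [e]
      refine (norm_add_le _ _).trans ?_
      rw [norm_smul, norm_smul, Real.norm_of_nonneg h0.le, Real.norm_of_nonneg hk.le]
      have := (hy (i + (n + 1)) i).trans (hdist i (n + 1))
      gcongr
    have hqb : 1 + n * κ ≤ q := by
      have hb : 1 + (n : ℝ) * κ ≤ (1 + κ) ^ n := one_add_mul_le_pow (by linarith) n
      refine hb.trans ?_
      rw [hq]
      apply pow_le_pow_left₀ (by linarith)
      rw [le_inv_comm₀ (by linarith) hk]
      rw [inv_eq_one_div, le_div_iff₀ (by linarith)]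
      nlinarith
    have hq1 : (1 - κ) * ((1 - κ)⁻¹) ^ (n + 1) = q := by
      rw [pow_succ, mul_comm, mul_assoc, inv_mul_cancel₀ hk.ne', mul_one]
    have hdi := hd i
    have key : (q - (1 + n * κ)) * (‖y i - x i‖ - ‖y (i + 1) - x (i + 1)‖) ≥ 0 :=
      mul_nonneg (by linarith) (by linarith)
    refine le_of_mul_le_mul_left ?_ hk
    rw [mul_add, ← mul_assoc (1 - κ) (((1 - κ)⁻¹) ^ (n + 1)), hq1]
    push_cast at h2 ⊢
    nlinarith

theorem km_converges (κ : ℝ) (h0 : 0 < κ) (h1 : κ < 1) (C : Set E) (hC : IsCompact C)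
    (T : E → E) (hT : ∀ a ∈ C, ∀ b ∈ C, ‖T a - T b‖ ≤ ‖a - b‖) (x : ℕ → E)
    (hxC : ∀ n, x n ∈ C) (hx : ∀ n, x (n + 1) = (1 - κ) • x n + κ • T (x n)) :
    ∃ p ∈ C, T p = p ∧ Tendsto x atTop (𝓝 p) := by
  have hk : 0 < 1 - κ := by linarith
  have hy : ∀ m n, ‖T (x m) - T (x n)‖ ≤ ‖x m - x n‖ :=
    fun m n => hT _ (hxC m) _ (hxC n)
  have hd : ∀ n, ‖T (x (n + 1)) - x (n + 1)‖ ≤ ‖T (x n) - x n‖ := by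
    intro n
    have e : T (x (n + 1)) - x (n + 1) =
        (T (x (n + 1)) - T (x n)) + (1 - κ) • (T (x n) - x n) := by
      nth_rw 2 [hx]; module
    have e2 : x (n + 1) - x n = κ • (T (x n) - x n) := by rw [hx]; module
    have h3 := hy (n + 1) n
    rw [e2, norm_smul, Real.norm_of_nonneg h0.le] at h3
    rw [e]
    refine (norm_add_le _ _).trans ?_
    rw [norm_smul, Real.norm_of_nonneg hk.le]
    linarith
  have hanti : Antitone (fun n => ‖T (x n) - x n‖) := antitone_nat_of_succ_le hd
  obtain ⟨r, hr⟩ : ∃ r, Tendsto (fun n => ‖T (x n) - x n‖) atTop (𝓝 r) :=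
    ⟨_, tendsto_atTop_ciInf hanti ⟨0, by rintro _ ⟨n, rfl⟩; positivity⟩⟩
  obtain ⟨B, hB⟩ := hC.isBounded.exists_norm_le
  have hrr : r = 0 := by
    have hr0 : 0 ≤ r := ge_of_tendsto' hr (fun n => norm_nonneg _)
    by_contra hne
    have hrp : 0 < r := lt_of_le_of_ne hr0 (Ne.symm hne)
    set M := 2 * B + ‖T (x 0) - x 0‖
    have hb : ∀ n : ℕ, (1 + n * κ) * r ≤ M := by
      intro n
      have hl : Tendsto (fun i => (1 + n * κ) * ‖T (x i) - x i‖) atTop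
          (𝓝 ((1 + n * κ) * r)) := hr.const_mul _
      have hrt : Tendsto (fun i => M + ((1 - κ)⁻¹) ^ n *
          (‖T (x i) - x i‖ - ‖T (x (i + n)) - x (i + n)‖)) atTop
          (𝓝 (M + ((1 - κ)⁻¹) ^ n * (r - r))) :=
        ((hr.sub (hr.comp (tendsto_add_atTop_nat n))).const_mul _).const_add _
      rw [sub_self, mul_zero, add_zero] at hrt
      refine le_of_tendsto_of_tendsto' hl hrt fun i => ?_
      refine (goebel_kirk κ h0 h1 x (fun n => T (x n)) hx hy hd n i).trans ?_
      gcongr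
      have e : T (x (i + n)) - x i = (T (x (i + n)) - T (x i)) + (T (x i) - x i) := by abel
      rw [e]
      refine (norm_add_le _ _).trans ?_
      have a1 := hy (i + n) i
      have a2 := norm_sub_le (x (i + n)) (x i)
      have a3 := hB _ (hxC (i + n))
      have a4 := hB _ (hxC i)
      have a5 : ‖T (x i) - x i‖ ≤ ‖T (x 0) - x 0‖ := hanti (Nat.zero_le i)
      simp only [M]
      linarith
    obtain ⟨n, hn⟩ := exists_nat_gt (M / (κ * r))
    rw [div_lt_iff₀ (by positivity)] at hn
    have := hb n
    nlinarith
  subst hrr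
  obtain ⟨p, hp, φ, hφ, hlim⟩ := hC.tendsto_subseq hxC
  have hlim0 : Tendsto (fun n => ‖x (φ n) - p‖) atTop (𝓝 0) :=
    tendsto_iff_norm_sub_tendsto_zero.1 hlim
  have hfix : T p = p := by
    have hs : Tendsto (fun n => 2 * ‖x (φ n) - p‖ + ‖T (x (φ n)) - x (φ n)‖) atTop
        (𝓝 (2 * 0 + 0)) := (hlim0.const_mul 2).add (hr.comp hφ.tendsto_atTop)
    have hle : ‖T p - p‖ ≤ 2 * 0 + 0 := by
      refine ge_of_tendsto' hs fun n => ?_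
      have e : T p - p = (T p - T (x (φ n))) + ((T (x (φ n)) - x (φ n)) + (x (φ n) - p)) := by
        abel
      rw [e]
      have a1 := norm_add_le (T p - T (x (φ n))) ((T (x (φ n)) - x (φ n)) + (x (φ n) - p))
      have a2 := norm_add_le (T (x (φ n)) - x (φ n)) (x (φ n) - p)
      have a3 := hT p hp _ (hxC (φ n))
      rw [norm_sub_rev p] at a3
      linarith
    have : ‖T p - p‖ = 0 := le_antisymm (by linarith) (norm_nonneg _)
    exact sub_eq_zero.1 (norm_eq_zero.1 this)
  refine ⟨p, hp, hfix, ?_⟩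
  rw [tendsto_iff_norm_sub_tendsto_zero]
  have hmono : Antitone (fun n => ‖x n - p‖) := by
    refine antitone_nat_of_succ_le fun n => ?_
    have e : x (n + 1) - p = (1 - κ) • (x n - p) + κ • (T (x n) - T p) := by
      rw [hfix, hx]; module
    rw [e]
    refine (norm_add_le _ _).trans ?_
    rw [norm_smul, norm_smul, Real.norm_of_nonneg h0.le, Real.norm_of_nonneg hk.le]
    have := mul_le_mul_of_nonneg_left (hT _ (hxC n) p hp) h0.le
    linarith
  exact (tendsto_iff_tendsto_subseq_of_antitone hmono hφ.tendsto_atTop).2 hlim0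

end KM

theorem fmax_eq (s : Finset V) (f : V → ℝ) : fmax s f = ⨆ k, if k ∈ s then f k else 0 := by
  unfold fmax
  congr 1
  funext k
  by_cases h : k ∈ s <;> simp [h]

theorem fmax_mem (s : Finset V) (f : V → ℝ) (B : ℝ) (hB : 0 ≤ B)
    (h : ∀ k ∈ s, 0 ≤ f k ∧ f k ≤ B) : 0 ≤ fmax s f ∧ fmax s f ≤ B := by
  rw [fmax_eq]
  constructor
  · apply Real.iSup_nonneg
    intro k
    split_ifs with hk
    · exact (h k hk).1
    · exact le_rfl
  · apply Real.iSup_le _ hB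
    intro k
    split_ifs with hk
    · exact (h k hk).2
    · exact hB

theorem fmax_le (s : Finset V) (f g : V → ℝ) (d : ℝ) (hd : 0 ≤ d)
    (h : ∀ k ∈ s, f k ≤ g k + d) : fmax s f ≤ fmax s g + d := by
  rw [fmax_eq, fmax_eq]
  rcases isEmpty_or_nonempty V with hV | hV
  · simp [hd]
  apply ciSup_le
  intro k
  have := le_ciSup (f := fun k => if k ∈ s then g k else 0) (Set.finite_range _).bddAbove k
  refine le_trans ?_ (add_le_add_left this d)
  split_ifs with hk
  · exact h k hk
  · linarith

theorem off_le (w a b a' b' d : ℝ) (hb : 0 ≤ b) (hb' : 0 ≤ b')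
    (h1 : |a - a'| ≤ d) (h2 : |b - b'| ≤ d) :
    pos (w - a) - (1 / 2) * pos (w - a - b) ≤ pos (w - a') - (1 / 2) * pos (w - a' - b') + d := by
  unfold pos
  rw [abs_le] at h1 h2
  rcases max_cases (w - a) 0 with ⟨e1, _⟩ | ⟨e1, _⟩ <;>
  rcases max_cases (w - a - b) 0 with ⟨e2, _⟩ | ⟨e2, _⟩ <;>
  rcases max_cases (w - a') 0 with ⟨e3, _⟩ | ⟨e3, _⟩ <;>
  rcases max_cases (w - a' - b') 0 with ⟨e4, _⟩ | ⟨e4, _⟩ <;>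
  rw [e1, e2, e3, e4] <;> linarith

theorem off_mem (w a b : ℝ) (hw : 0 < w) (ha : 0 ≤ a) (hb : 0 ≤ b) :
    0 ≤ pos (w - a) - (1 / 2) * pos (w - a - b) ∧
    pos (w - a) - (1 / 2) * pos (w - a - b) ≤ w := by
  unfold pos
  rcases max_cases (w - a) 0 with ⟨e1, _⟩ | ⟨e1, _⟩ <;>
  rcases max_cases (w - a - b) 0 with ⟨e2, _⟩ | ⟨e2, _⟩ <;>
  rw [e1, e2] <;> constructor <;> linarith

theorem conv_aux
    (G : SimpleGraph V) [DecidableRel G.Adj]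
    (w : V → V → ℝ) (hw : GoodW G w) (W : ℝ)
    (hwW : ∀ i j, G.Adj i j → w i j ≤ W)
    (κ : ℝ) (hκ : κ ∈ Set.Ioo (0 : ℝ) 1) (α0 : V → V → ℝ)
    (h0 : ∀ i j, G.Adj i j → 0 ≤ α0 i j) :
    ∃ αs : V → V → ℝ, ValidMsg G αs ∧ IsFixedPt G w αs ∧
          ∀ i j, Filter.Tendsto (fun t => dyn G w κ α0 t i j) Filter.atTop
            (nhds (αs i j)) := by
  obtain ⟨hκ0, hκ1⟩ := hκ
  set B := max W 0 + ‖α0‖ with hBdef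
  have hWB : W ≤ B := by
    have := le_max_left W 0
    have := norm_nonneg α0
    linarith
  have hB0 : 0 ≤ B := add_nonneg (le_max_right _ _) (norm_nonneg _)
  have hent : ∀ (f : V → V → ℝ) i j, |f i j| ≤ ‖f‖ := fun f i j =>
    (norm_le_pi_norm (f i) j).trans (norm_le_pi_norm f i)
  set C : Set (V → V → ℝ) :=
    {α | ∀ i j, α i j ∈ Set.Icc (-B) B ∧ (G.Adj i j → 0 ≤ α i j)} with hC
  have hclosed : IsClosed C := by
    have : C = (⋂ i, ⋂ j, {α | α i j ∈ Set.Icc (-B) B}) ∩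
        ⋂ i, ⋂ j, ⋂ (_ : G.Adj i j), {α : V → V → ℝ | 0 ≤ α i j} := by
      ext α
      simp only [hC, Set.mem_setOf_eq, Set.mem_inter_iff, Set.mem_iInter, forall_and]
    rw [this]
    refine IsClosed.inter ?_ ?_
    · refine isClosed_iInter fun i => isClosed_iInter fun j => ?_
      exact isClosed_Icc.preimage (by fun_prop)
    · refine isClosed_iInter fun i => isClosed_iInter fun j => isClosed_iInter fun _ => ?_
      exact isClosed_Ici.preimage (f := fun α : V → V → ℝ => α i j) (by fun_prop)
  have hcomp : IsCompact C := by
    refine (isCompact_closedBall (0 : V → V → ℝ) B).of_isClosed_subset hclosed ?_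
    intro α hα
    rw [mem_closedBall_zero_iff]
    refine (pi_norm_le_iff_of_nonneg hB0).2 fun i => (pi_norm_le_iff_of_nonneg hB0).2 fun j => ?_
    exact abs_le.2 (hα i j).1
  have hTm : ∀ α ∈ C, ∀ i j, 0 ≤ upd G w α i j ∧ upd G w α i j ≤ B := by
    intro α hα i j
    apply fmax_mem _ _ _ hB0
    intro k hk
    have hadj : G.Adj i k := by simpa using (Finset.mem_erase.1 hk).2
    have := off_mem (w k i) (α k i) (α i k) (hw.2 _ _ hadj.symm) ((hα k i).2 hadj.symm)
      ((hα i k).2 hadj)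
    exact ⟨this.1, this.2.trans ((hwW _ _ hadj.symm).trans hWB)⟩
  have hTle : ∀ α ∈ C, ∀ β ∈ C, ∀ i j, upd G w α i j ≤ upd G w β i j + ‖α - β‖ := by
    intro α hα β hβ i j
    apply fmax_le _ _ _ _ (norm_nonneg _)
    intro k hk
    have hadj : G.Adj i k := by simpa using (Finset.mem_erase.1 hk).2
    exact off_le _ _ _ _ _ _ ((hα i k).2 hadj) ((hβ i k).2 hadj)
      (hent (α - β) k i) (hent (α - β) i k)
  have hT : ∀ α ∈ C, ∀ β ∈ C, ‖upd G w α - upd G w β‖ ≤ ‖α - β‖ := by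
    intro α hα β hβ
    refine (pi_norm_le_iff_of_nonneg (norm_nonneg _)).2 fun i =>
      (pi_norm_le_iff_of_nonneg (norm_nonneg _)).2 fun j => ?_
    have a1 := hTle α hα β hβ i j
    have a2 := hTle β hβ α hα i j
    rw [norm_sub_rev β] at a2
    simp only [Pi.sub_apply, Real.norm_eq_abs]
    exact abs_le.2 ⟨by linarith, by linarith⟩
  have hx : ∀ n, dyn G w κ α0 (n + 1) =
      (1 - κ) • dyn G w κ α0 n + κ • upd G w (dyn G w κ α0 n) := by
    intro n
    funext i j
    simp [dyn]
  have hk : 0 ≤ 1 - κ := by linarith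
  have hxC : ∀ n, dyn G w κ α0 n ∈ C := by
    intro n
    induction n with
    | zero =>
      intro i j
      refine ⟨abs_le.1 ((hent α0 i j).trans ?_), h0 i j⟩
      have := le_max_right W 0
      linarith
    | succ n ih =>
      intro i j
      obtain ⟨⟨b1, b2⟩, b3⟩ := ih i j
      obtain ⟨t1, t2⟩ := hTm _ ih i j
      simp only [dyn]
      refine ⟨⟨by nlinarith, by nlinarith⟩, fun h => ?_⟩
      exact add_nonneg (mul_nonneg hk (b3 h)) (mul_nonneg hκ0.le t1)
  obtain ⟨p, hp, hfix, hlim⟩ := km_converges κ hκ0 hκ1 C hcomp (upd G w) hT _ hxC hx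
  refine ⟨p, fun i j h => (hp i j).2 h, fun i j _ => by rw [hfix], fun i j => ?_⟩
  exact tendsto_pi_nhds.1 (tendsto_pi_nhds.1 hlim i) j

/-- The natural dynamics has at least one fixed point, and from any
initial condition in `[0,W]^{2|E|}` the iterates converge to a fixed point of `T`. -/
theorem exists_fixedPt_and_convergence
    {V : Type*} [Fintype V] [DecidableEq V] (G : SimpleGraph V) [DecidableRel G.Adj]
    (w : V → V → ℝ) (hw : GoodW G w) (W : ℝ)
    (hwW : ∀ i j, G.Adj i j → w i j ≤ W)
    (κ : ℝ) (hκ : κ ∈ Set.Ioo (0 : ℝ) 1) :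
    (∃ α : V → V → ℝ, ValidMsg G α ∧ IsFixedPt G w α) ∧
      ∀ α0 : V → V → ℝ, (∀ i j, G.Adj i j → α0 i j ∈ Set.Icc (0 : ℝ) W) →
        ∃ αs : V → V → ℝ, IsFixedPt G w αs ∧
          ∀ i j, Filter.Tendsto (fun t => dyn G w κ α0 t i j) Filter.atTop
            (nhds (αs i j)) := by
  constructor
  · obtain ⟨α, h1, h2, _⟩ := conv_aux G w hw W hwW κ hκ (fun _ _ => 0) (fun _ _ _ => le_rfl)
    exact ⟨α, h1, h2⟩
  · intro α0 h0
    obtain ⟨α, _, h2, h3⟩ := conv_aux G w hw W hwW κ hκ α0 (fun i j h => (h0 i j h).1)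
    exact ⟨α, h2, h3⟩
end EN
end

section
/- Let G be an exchange network for which the LP relaxation of maximum weight matching admits a unique optimum, and this optimum is integral, corresponding to the matching M*. Let α be a fixed point of the natural dynamics update operator, with associated offers m and earnings vector γ. Then α induces the matching M*, and (M*, γ) is a Nash bargaining solution. -/
namespace EN

open Finset

variable {V : Type*}

variable [Fintype V] [DecidableEq V]

theorem gordan_aux {E I : Type*} [Fintype E] [Fintype I] [DecidableEq E] [DecidableEq I]
    (S : Set E) (L : E → I → ℝ) :
    (∃ q : E → ℝ, (∀ e, 0 ≤ q e) ∧ ∑ e, q e = 1 ∧ (∀ e, e ∉ S → q e = 0) ∧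
      ∀ i, 0 ≤ ∑ e, q e * L e i) ∨
    ∃ z : I → ℝ, (∀ i, 0 ≤ z i) ∧ ∀ e ∈ S, ∑ i, z i * L e i < 0 := by
  by_cases h : ∃ q : E → ℝ, (∀ e, 0 ≤ q e) ∧ ∑ e, q e = 1 ∧ (∀ e, e ∉ S → q e = 0) ∧
      ∀ i, 0 ≤ ∑ e, q e * L e i
  · exact Or.inl h
  right
  let T : (E → ℝ) →ₗ[ℝ] (I → ℝ) := Fintype.linearCombination ℝ L
  have hT : ∀ q i, T q i = ∑ e, q e * L e i := by
    intro q i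
    simp [T, Fintype.linearCombination_apply, Finset.sum_apply]
  let Z : Submodule ℝ (E → ℝ) :=
    { carrier := {q | ∀ e, e ∉ S → q e = 0}
      add_mem' := by
        intro a b ha hb e he
        simp [ha e he, hb e he]
      zero_mem' := by
        intro e _
        rfl
      smul_mem' := by
        intro c a ha e he
        simp [ha e he] }
  let K : Set (E → ℝ) := stdSimplex ℝ E ∩ (Z : Set (E → ℝ))
  have hKc : IsCompact K :=
    (isCompact_stdSimplex ℝ E).inter_right Z.closed_of_finiteDimensional
  have hKv : Convex ℝ K := (convex_stdSimplex ℝ E).inter Z.convex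
  have hdisj : Disjoint (T '' K) (Set.Ici (0 : I → ℝ)) := by
    rw [Set.disjoint_left]
    rintro _ ⟨q, ⟨⟨h0, h1⟩, hz⟩, rfl⟩ hq
    refine h ⟨q, h0, h1, hz, fun i => ?_⟩
    rw [← hT]
    exact hq i
  obtain ⟨f, u, v, h1, h2, h3⟩ := geometric_hahn_banach_compact_closed
    (hKv.linear_image T) (hKc.image T.continuous_of_finiteDimensional)
    (convex_Ici (0 : I → ℝ)) isClosed_Ici hdisj
  have hv : v < 0 := by simpa using h3 0 (by simp)
  have hf : ∀ x : I → ℝ, f x = ∑ i, f (Pi.single i 1) * x i := by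
    intro x
    conv_lhs => rw [pi_eq_sum_univ' x]
    rw [map_sum]
    refine Finset.sum_congr rfl fun i _ => ?_
    rw [map_smul, smul_eq_mul, mul_comm]
  refine ⟨fun i => f (Pi.single i 1), fun i => ?_, fun e he => ?_⟩
  · by_contra hneg
    push Not at hneg
    have hh := h3 ((v / f (Pi.single i 1)) • Pi.single i 1) (by
      have : 0 ≤ v / f (Pi.single i 1) := div_nonneg_of_nonpos hv.le hneg.le
      refine Set.mem_Ici.2 (smul_nonneg this ?_)
      intro j
      by_cases hj : j = i
      · subst hj
        simp
      · simp [hj])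
    rw [map_smul, smul_eq_mul, div_mul_cancel₀ _ hneg.ne] at hh
    exact lt_irrefl _ hh
  · have := h1 (T (Pi.single e 1)) ⟨_, ⟨single_mem_stdSimplex ℝ e, by
      intro e' he'
      have : e' ≠ e := by
        rintro rfl
        exact he' he
      simp [this]⟩, rfl⟩
    rw [hf] at this
    have h4 : ∀ i, T (Pi.single e 1) i = L e i := by
      intro i
      rw [hT]
      simp [Pi.single_apply]
    simp only [h4] at this
    linarith

theorem core_primal {U : Type*} [Fintype U] [DecidableEq U] (G : SimpleGraph U)
    [DecidableRel G.Adj] (w : U → U → ℝ) (hw : GoodW G w)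
    (M : U → U → Prop) (hM : IsMatching G M)
    (hopt : LPOptimal G w (mInd M))
    (huniq : ∀ x, LPOptimal G w x → x = mInd M)
    (γ : U → ℝ) (h0 : ∀ i, 0 ≤ γ i) (hd : ∀ i j, G.Adj i j → w i j ≤ γ i + γ j)
    (s : U → U → ℝ) (hs0 : ∀ i j, 0 ≤ s i j) (hsym : ∀ i j, s i j = s j i)
    (hsN : ∀ i j, s i j ≠ 0 → G.Adj i j ∧ ¬ M i j ∧ γ i + γ j = w i j)
    (hsum : ∀ i, ∑ j, s i j ≤ 2)
    (hR : ∀ i j, M i j → 0 < γ i → ∑ k, s j k ≤ ∑ k, s i k) :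
    ∀ i j, s i j = 0 := by
  classical
  set R : U → ℝ := fun i => ∑ j, s i j with hRdef
  have hR0 : ∀ i, 0 ≤ R i := fun i => Finset.sum_nonneg fun j _ => hs0 i j
  let mx : U → U → ℝ := fun i j => max (R i) (R j)
  let x : U → U → ℝ := fun i j => mInd M i j * (1 - (1/2) * mx i j) + (1/2) * s i j
  have hmx : ∀ i j, mx i j ≤ 2 := fun i j => max_le (hsum i) (hsum j)
  have hmi : ∀ i j, mInd M i j = mInd M j i := by
    intro i j
    unfold mInd
    have : M i j ↔ M j i := ⟨hM.symm i j, hM.symm j i⟩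
    simp only [this]
  have hmi0 : ∀ i j, 0 ≤ mInd M i j := by
    intro i j
    unfold mInd
    split_ifs <;> norm_num
  have hnb : ∀ (f : U → ℝ) i, (∀ j, ¬ G.Adj i j → f j = 0) →
      ∑ j ∈ G.neighborFinset i, f j = ∑ j, f j := by
    intro f i hf
    refine Finset.sum_subset (Finset.subset_univ _) fun j _ hj => hf j ?_
    simpa using hj
  have hmA : ∀ i j, ¬ G.Adj i j → mInd M i j = 0 := by
    intro i j h
    unfold mInd
    rw [if_neg fun h' => h (hM.subset _ _ h')]
  have hsA : ∀ i j, ¬ G.Adj i j → s i j = 0 := by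
    intro i j h
    by_contra h'
    exact h (hsN i j h').1
  have hrow : ∀ i (f : U → ℝ), (∃ j, M i j ∧ ∑ k, mInd M i k * f k = f j) ∨
      ((∀ j, ¬ M i j) ∧ ∑ k, mInd M i k * f k = 0) := by
    intro i f
    by_cases h : ∃ j, M i j
    · obtain ⟨j, hj⟩ := h
      left
      refine ⟨j, hj, ?_⟩
      rw [Finset.sum_eq_single j]
      · simp [mInd, hj]
      · intro b _ hb
        have : ¬ M i b := fun h' => hb (hM.unique _ _ _ h' hj)
        simp [mInd, this]
      · simp
    · push Not at h
      right
      exact ⟨h, Finset.sum_eq_zero fun k _ => by simp [mInd, h k]⟩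
  have hxA : ∀ i j, ¬ G.Adj i j → x i j = 0 := by
    intro i j h
    simp [x, hmA i j h, hsA i j h]
  have hfeas : LPFeasible G x := by
    refine ⟨?_, ?_, hxA, ?_⟩
    · intro i j
      simp only [x, mx]
      rw [hmi i j, hsym i j, max_comm]
    · intro i j
      have h1 := hmx i j
      have h2 := hs0 i j
      have h3 := mul_nonneg (hmi0 i j) (show 0 ≤ 1 - (1/2) * mx i j by linarith)
      simp only [x]
      linarith
    · intro i
      rw [hnb _ i (hxA i)]
      simp only [x]
      rw [Finset.sum_add_distrib, ← Finset.mul_sum]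
      change _ + 1 / 2 * R i ≤ 1
      rcases hrow i (fun j => 1 - (1/2) * mx i j) with ⟨j, _, h⟩ | ⟨_, h⟩
      · rw [h]
        have : R i ≤ mx i j := le_max_left _ _
        linarith
      · rw [h]
        have : R i ≤ 2 := hsum i
        linarith
  have key1 : ∑ i, ∑ j, w i j * s i j = 2 * ∑ i, γ i * R i := by
    have e1 : ∑ i, ∑ j, w i j * s i j = ∑ i, ∑ j, (γ i * s i j + γ j * s i j) := by
      refine Finset.sum_congr rfl fun i _ => Finset.sum_congr rfl fun j _ => ?_
      by_cases h : s i j = 0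
      · simp [h]
      · rw [← (hsN i j h).2.2]
        ring
    have e2 : ∑ i, ∑ j, γ i * s i j = ∑ i, γ i * R i := by
      simp [hRdef, Finset.mul_sum]
    have e3 : ∑ i, ∑ j, γ j * s i j = ∑ i, γ i * R i := by
      rw [Finset.sum_comm, ← e2]
      refine Finset.sum_congr rfl fun i _ => Finset.sum_congr rfl fun j _ => ?_
      rw [hsym]
    rw [e1]
    simp only [Finset.sum_add_distrib]
    rw [e2, e3]
    ring
  have key2 : ∑ i, ∑ j, mInd M i j * (w i j * mx i j) ≤ 2 * ∑ i, γ i * R i := by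
    have e1 : ∑ i, ∑ j, mInd M i j * (w i j * mx i j) ≤
        ∑ i, ∑ j, (mInd M i j * (γ i * mx i j) + mInd M i j * (γ j * mx i j)) := by
      refine Finset.sum_le_sum fun i _ => Finset.sum_le_sum fun j _ => ?_
      by_cases h : G.Adj i j
      · rw [← mul_add, ← add_mul]
        have : 0 ≤ mx i j := (hR0 i).trans (le_max_left _ _)
        exact mul_le_mul_of_nonneg_left (mul_le_mul_of_nonneg_right (hd i j h) this) (hmi0 i j)
      · simp [hmA i j h]
    have e2 : ∑ i, ∑ j, mInd M i j * (γ i * mx i j) ≤ ∑ i, γ i * R i := by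
      refine Finset.sum_le_sum fun i _ => ?_
      rcases hrow i (fun j => γ i * mx i j) with ⟨j, hj, h⟩ | ⟨_, h⟩
      · rw [h]
        rcases (h0 i).eq_or_lt with hz | hz
        · simp [← hz]
        · have : mx i j = R i := max_eq_left (hR i j hj hz)
          rw [this]
      · rw [h]
        exact mul_nonneg (h0 i) (hR0 i)
    have e3 : ∑ i, ∑ j, mInd M i j * (γ j * mx i j) = ∑ i, ∑ j, mInd M i j * (γ i * mx i j) := by
      rw [Finset.sum_comm]
      refine Finset.sum_congr rfl fun i _ => Finset.sum_congr rfl fun j _ => ?_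
      rw [hmi j i]
      simp only [mx]
      rw [max_comm]
    simp only [Finset.sum_add_distrib] at e1
    rw [e3] at e1
    linarith
  have hvx : LPval G w (mInd M) ≤ LPval G w x := by
    unfold LPval
    have a1 : ∀ i, ∑ j ∈ G.neighborFinset i, w i j * mInd M i j = ∑ j, w i j * mInd M i j :=
      fun i => hnb _ i fun j hj => by simp [hmA i j hj]
    have a2 : ∀ i, ∑ j ∈ G.neighborFinset i, w i j * x i j = ∑ j, w i j * x i j :=
      fun i => hnb _ i fun j hj => by simp [hxA i j hj]
    simp only [a1, a2]
    have a3 : ∑ i, ∑ j, w i j * x i j = ∑ i, ∑ j, w i j * mInd M i j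
        - (1/2) * ∑ i, ∑ j, mInd M i j * (w i j * mx i j)
        + (1/2) * ∑ i, ∑ j, w i j * s i j := by
      simp only [Finset.mul_sum, ← Finset.sum_add_distrib, ← Finset.sum_sub_distrib]
      refine Finset.sum_congr rfl fun i _ => Finset.sum_congr rfl fun j _ => ?_
      simp only [x]
      ring
    rw [a3, key1]
    linarith
  have hx := huniq x ⟨hfeas, fun y hy => (hopt.2 y hy).trans hvx⟩
  intro i j
  by_contra h
  have hN := hsN i j h
  have h5 := congrFun (congrFun hx i) j
  simp [x, mInd, hN.2.1] at h5
  exact h h5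

theorem core_empty {U : Type*} [Fintype U] [DecidableEq U] (G : SimpleGraph U)
    [DecidableRel G.Adj] (w : U → U → ℝ) (hw : GoodW G w)
    (M : U → U → Prop) (hM : IsMatching G M)
    (hopt : LPOptimal G w (mInd M))
    (huniq : ∀ x, LPOptimal G w x → x = mInd M)
    (γ : U → ℝ) (h0 : ∀ i, 0 ≤ γ i) (hd : ∀ i j, G.Adj i j → w i j ≤ γ i + γ j)
    (hprop : ∀ i j k, M i j → 0 < γ i → (G.Adj j k ∧ ¬ M j k ∧ γ j + γ k = w j k) →
      ∃ l, G.Adj i l ∧ ¬ M i l ∧ γ i + γ l = w i l) :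
    ∀ i j, G.Adj i j → ¬ M i j → γ i + γ j ≠ w i j := by
  classical
  let N : U → U → Prop := fun i j => G.Adj i j ∧ ¬ M i j ∧ γ i + γ j = w i j
  have hNs : ∀ i j, N i j → N j i := by
    rintro i j ⟨h1, h2, h3⟩
    exact ⟨h1.symm, fun h => h2 (hM.symm _ _ h), by rw [hw.1 j i, ← h3, add_comm]⟩
  let g : U → U := fun i => if h : ∃ j, M i j then h.choose else i
  have hg : ∀ i j, M i j → g i = j := by
    intro i j h
    have hh : ∃ j, M i j := ⟨j, h⟩
    simp only [g, dif_pos hh]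
    exact hM.unique _ _ _ hh.choose_spec h
  have hgu : ∀ i, (∀ j, ¬ M i j) → g i = i := by
    intro i h
    have hh : ¬ ∃ j, M i j := by
      push Not
      exact h
    simp only [g, dif_neg hh]
  have hgg : ∀ i, g (g i) = i := by
    intro i
    by_cases h : ∃ j, M i j
    · obtain ⟨j, hj⟩ := h
      rw [hg i j hj, hg j i (hM.symm _ _ hj)]
    · push Not at h
      rw [hgu i h, hgu i h]
  let δ : U → U → ℝ := fun i a => if i = a then 1 else 0
  let L : U × U → U → ℝ := fun e i =>
    if 0 < γ i then δ i e.1 + δ i e.2 - δ (g i) e.1 - δ (g i) e.2 else 0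
  rcases gordan_aux {e : U × U | N e.1 e.2} L with ⟨q, hq0, hq1, hqN, hqL⟩ | ⟨z, hz0, hz⟩
  · exfalso
    let s : U → U → ℝ := fun i j => q (i, j) + q (j, i)
    have hRs : ∀ i, ∑ e, q e * (δ i e.1 + δ i e.2) = ∑ j, s i j := by
      intro i
      simp only [mul_add, Finset.sum_add_distrib, s]
      congr 1
      · rw [Fintype.sum_prod_type, Finset.sum_comm]
        simp [δ]
      · rw [Fintype.sum_prod_type]
        simp [δ]
    have hs := core_primal G w hw M hM hopt huniq γ h0 hd s
      (fun i j => add_nonneg (hq0 _) (hq0 _)) (fun i j => add_comm _ _)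
      (by
        intro i j h
        by_contra hn
        have h1 : q (i, j) = 0 := hqN (i, j) hn
        have h2 : q (j, i) = 0 := hqN (j, i) fun h' => hn (hNs _ _ h')
        exact h (by simp [s, h1, h2]))
      (by
        intro i
        rw [← hRs]
        calc ∑ e, q e * (δ i e.1 + δ i e.2) ≤ ∑ e, q e * 2 := by
              refine Finset.sum_le_sum fun e _ => mul_le_mul_of_nonneg_left ?_ (hq0 e)
              simp only [δ]
              split_ifs <;> norm_num
          _ = 2 := by rw [← Finset.sum_mul, hq1, one_mul])
      (by
        intro i j hij hi
        rw [← hRs, ← hRs, ← sub_nonneg, ← Finset.sum_sub_distrib]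
        refine (hqL i).trans_eq (Finset.sum_congr rfl fun e _ => ?_)
        simp only [L, if_pos hi, hg i j hij]
        ring)
    have hq : ∀ e, q e = 0 := by
      rintro ⟨i, j⟩
      have h1 := hs i j
      have h2 := hq0 (i, j)
      have h3 := hq0 (j, i)
      simp only [s] at h1
      linarith
    simp [hq] at hq1
  · let zh : U → ℝ := fun i => if 0 < γ i then z i else 0
    let y : U → ℝ := fun i => zh i - zh (g i)
    have hzh : ∀ i, 0 ≤ zh i := by
      intro i
      simp only [zh]
      split_ifs
      · exact hz0 i
      · exact le_rfl
    have hyN : ∀ a b, N a b → y a + y b < 0 := by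
      intro a b hab
      have h1 := hz (a, b) hab
      have h2 : ∀ i, z i * L (a, b) i = zh i * δ i a + zh i * δ i b - zh i * δ (g i) a
          - zh i * δ (g i) b := by
        intro i
        simp only [L, zh]
        split_ifs <;> ring
      have h3 : ∀ a, ∑ i, zh i * δ i a = zh a := by
        intro a
        simp [δ]
      have h4 : ∀ a, ∑ i, zh i * δ (g i) a = zh (g a) := by
        intro a
        rw [Finset.sum_eq_single (g a)]
        · simp [δ, hgg]
        · intro b _ hb
          have : g b ≠ a := by
            rintro rfl
            exact hb (hgg b).symm
          simp [δ, this]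
        · simp
      simp only [h2, Finset.sum_add_distrib, Finset.sum_sub_distrib, h3, h4] at h1
      simp only [y]
      linarith
    have hyg : ∀ i j, M i j → y j = - y i := by
      intro i j h
      simp only [y, hg i j h, hg j i (hM.symm _ _ h)]
      ring
    have hyu : ∀ i, (∀ j, ¬ M i j) → y i = 0 := by
      intro i h
      simp [y, hgu i h]
    have hyz : ∀ i, ¬ 0 < γ i → y i ≤ 0 := by
      intro i h
      have := hzh (g i)
      simp only [y, zh, if_neg h] at *
      linarith
    let A : Finset U := Finset.univ.filter fun v => 0 < γ v ∧ ∃ u, N v u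
    have hA : ∀ v, v ∈ A ↔ 0 < γ v ∧ ∃ u, N v u := by simp [A]
    have hneg : ∀ v ∈ A, y v < 0 := by
      intro v0 hv0
      obtain ⟨v, hv, hmax⟩ := Finset.exists_max_image A y ⟨v0, hv0⟩
      refine (hmax v0 hv0).trans_lt ?_
      obtain ⟨_, u, hu⟩ := (hA v).1 hv
      have h1 := hyN v u hu
      by_cases h : ∃ v', M u v'
      · obtain ⟨v', hv'⟩ := h
        have h2 := hyg u v' hv'
        by_cases hp : 0 < γ v'
        · have := hmax v' ((hA v').2 ⟨hp, hprop v' u v (hM.symm _ _ hv') hp (hNs _ _ hu)⟩)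
          linarith
        · have := hyz v' hp
          linarith
      · push Not at h
        have := hyu u h
        linarith
    have hAe : ∀ v, v ∉ A := by
      intro v hv
      have h1 := hneg v hv
      obtain ⟨_, u, hu⟩ := (hA v).1 hv
      by_cases h : ∃ v', M v v'
      · obtain ⟨v', hv'⟩ := h
        have h2 := hyg v v' hv'
        by_cases hp : 0 < γ v'
        · have := hneg v' ((hA v').2 ⟨hp, hprop v' v u (hM.symm _ _ hv') hp hu⟩)
          linarith
        · have := hyz v' hp
          linarith
      · push Not at h
        have := hyu v h
        linarith
    intro i j hadj hm ht
    have hN : N i j := ⟨hadj, hm, ht⟩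
    have hwp := hw.2 i j hadj
    by_cases hi : 0 < γ i
    · exact hAe i ((hA i).2 ⟨hi, j, hN⟩)
    · exact hAe j ((hA j).2 ⟨by linarith, i, hNs _ _ hN⟩)

theorem fmax_spec {U : Type*} [Fintype U] [DecidableEq U] (s : Finset U) (f : U → ℝ)
    (hf : ∀ k ∈ s, 0 ≤ f k) :
    0 ≤ fmax s f ∧ (∀ k ∈ s, f k ≤ fmax s f) ∧
      (fmax s f = 0 ∨ ∃ k ∈ s, f k = fmax s f) := by
  have h1 : ∀ k, (⨆ (_ : k ∈ s), f k) = if k ∈ s then f k else 0 := by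
    intro k
    split_ifs with h
    · simp [h]
    · simp [h]
  have h2 : fmax s f = ⨆ k, if k ∈ s then f k else 0 := by
    unfold fmax
    simp only [h1]
  have hb : BddAbove (Set.range fun k => if k ∈ s then f k else 0) :=
    (Set.finite_range _).bddAbove
  refine ⟨?_, ?_, ?_⟩
  · rw [h2]
    refine Real.iSup_nonneg fun k => ?_
    split_ifs with h
    · exact hf k h
    · exact le_rfl
  · intro k hk
    rw [h2]
    simpa [hk] using le_ciSup hb k
  · rw [h2]
    rcases isEmpty_or_nonempty U with he | he
    · left
      simp
    · obtain ⟨k, hk⟩ := exists_eq_ciSup_of_finite (f := fun k => if k ∈ s then f k else 0)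
      by_cases h : k ∈ s
      · right
        exact ⟨k, h, by simpa [h] using hk⟩
      · left
        rw [← hk]
        simp [h]

theorem fmax_congr {U : Type*} [Fintype U] [DecidableEq U] (s : Finset U) (f g : U → ℝ)
    (h : ∀ k ∈ s, f k = g k) : fmax s f = fmax s g := by
  unfold fmax
  congr 1
  funext k
  by_cases hk : k ∈ s
  · simp [hk, h k hk]
  · simp [hk]

theorem offer_tight {U : Type*} (w α : U → U → ℝ) (hs : ∀ i j, w i j = w j i) (i j : U)
    (ha : 0 ≤ α i j) (h : α i j + α j i ≤ w i j) :
    offer w α j i = (w i j + α i j - α j i) / 2 := by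
  unfold offer pos
  rw [hs j i, max_eq_left (by linarith), max_eq_left (by linarith)]
  ring

theorem offer_loose {U : Type*} (w α : U → U → ℝ) (hs : ∀ i j, w i j = w j i) (i j : U)
    (h : w i j ≤ α i j + α j i) :
    offer w α j i = pos (w i j - α j i) := by
  unfold offer
  have : pos (w j i - α j i - α i j) = 0 := by
    unfold pos
    rw [hs j i]
    exact max_eq_right (by linarith)
  rw [this, hs j i]
  ring

/-- If the LP relaxation of maximum weight matching has a unique
optimum, which is integral and corresponds to the matching `M*`, then every fixed
point of the natural dynamics induces `M*` and its earnings vector, together with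
`M*`, forms a Nash bargaining solution. -/
theorem fixedPoint_gives_NB
    {V : Type*} [Fintype V] [DecidableEq V] (G : SimpleGraph V) [DecidableRel G.Adj]
    (w : V → V → ℝ) (hw : GoodW G w)
    (Mstar : V → V → Prop) (hM : IsMatching G Mstar)
    (hopt : LPOptimal G w (mInd Mstar))
    (huniq : ∀ x, LPOptimal G w x → x = mInd Mstar)
    (α : V → V → ℝ) (hval : ValidMsg G α) (hfp : IsFixedPt G w α) :
    Induces G (offer w α) Mstar ∧ IsNBSolution G w Mstar (earn G w α) := by
  classical
  obtain ⟨hs, hwp⟩ := hw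
  set γ := earn G w α with hγ
  have hoff : ∀ i j, G.Adj i j → 0 ≤ offer w α j i := by
    intro i j hij
    have ha := hval i j hij
    rcases le_total (α i j + α j i) (w i j) with h | h
    · have hb := hval j i hij.symm
      rw [offer_tight w α hs i j ha h]
      linarith
    · rw [offer_loose w α hs i j h]
      exact le_max_right _ _
  have hE := fun i => fmax_spec (G.neighborFinset i) (fun k => offer w α k i)
    (fun k hk => hoff i k (by simpa using hk))
  have hγ0 : ∀ i, 0 ≤ γ i := fun i => (hE i).1
  have hγm : ∀ i k, G.Adj i k → offer w α k i ≤ γ i :=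
    fun i k h => (hE i).2.1 k (by simpa using h)
  have hγa : ∀ i, 0 < γ i → ∃ k, G.Adj i k ∧ offer w α k i = γ i := by
    intro i hi
    rcases (hE i).2.2 with h | ⟨k, hk, h⟩
    · exact absurd h hi.ne'
    · exact ⟨k, by simpa using hk, h⟩
  have hU := fun i j => fmax_spec ((G.neighborFinset i).erase j) (fun k => offer w α k i)
    (fun k hk => hoff i k (by simpa using (Finset.mem_erase.1 hk).2))
  have hαm : ∀ i j k, G.Adj i j → G.Adj i k → k ≠ j → offer w α k i ≤ α i j := by
    intro i j k hij hik hkj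
    rw [← hfp i j hij]
    exact (hU i j).2.1 k (by simp [hkj, hik])
  have hαa : ∀ i j, G.Adj i j → 0 < α i j →
      ∃ k, G.Adj i k ∧ k ≠ j ∧ offer w α k i = α i j := by
    intro i j hij hpos
    rw [← hfp i j hij] at hpos ⊢
    rcases (hU i j).2.2 with h | ⟨k, hk, h⟩
    · exact absurd h hpos.ne'
    · rw [Finset.mem_erase] at hk
      exact ⟨k, by simpa using hk.2, hk.1, h⟩
  have hαγ : ∀ i j, G.Adj i j → α i j ≤ γ i := by
    intro i j hij
    rcases (hval i j hij).eq_or_lt with h | h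
    · rw [← h]
      exact hγ0 i
    · obtain ⟨k, hk, _, he⟩ := hαa i j hij h
      rw [← he]
      exact hγm i k hk
  have hγle : ∀ i j, G.Adj i j → γ i ≤ α i j ∨ γ i = offer w α j i := by
    intro i j hij
    rcases (hγ0 i).eq_or_lt with h | h
    · left
      rw [← h]
      exact hval i j hij
    · obtain ⟨k, hk, he⟩ := hγa i h
      by_cases hkj : k = j
      · subst hkj
        exact Or.inr he.symm
      · left
        rw [← he]
        exact hαm i j k hij hk hkj
  have htg : ∀ i j, G.Adj i j → α i j + α j i ≤ w i j →
      γ i = (w i j + α i j - α j i) / 2 ∧ γ i = offer w α j i := by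
    intro i j hij h
    have h1 := offer_tight w α hs i j (hval i j hij) h
    have h2 := hγm i j hij
    rcases hγle i j hij with h3 | h3
    · constructor <;> linarith
    · exact ⟨h3.trans h1, h3⟩
  have hlo : ∀ i j, G.Adj i j → w i j < α i j + α j i → γ i = α i j ∧
      (0 < offer w α j i → offer w α j i < γ i) := by
    intro i j hij h
    have h1 := offer_loose w α hs i j h.le
    have h4 := hαγ i j hij
    have h5 := hval i j hij
    have h2 : offer w α j i ≤ α i j := by
      rw [h1]
      exact max_le (by linarith) h5
    have h3 : γ i = α i j := by
      rcases hγle i j hij with h3 | h3 <;> linarith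
    refine ⟨h3, fun hp => ?_⟩
    rw [h1] at hp ⊢
    unfold pos at hp ⊢
    rcases lt_max_iff.1 hp with h6 | h6
    · rw [max_eq_left h6.le]
      linarith
    · exact absurd h6 (lt_irrefl _)
  have htight : ∀ i j, G.Adj i j → γ i + γ j = w i j → α i j + α j i ≤ w i j := by
    intro i j hij h
    by_contra hc
    push Not at hc
    have h1 := (hlo i j hij hc).1
    have h2 := (hlo j i hij.symm (by rw [hs j i]; linarith)).1
    linarith
  have htight' : ∀ i j, G.Adj i j → α i j + α j i ≤ w i j → γ i + γ j = w i j := by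
    intro i j hij h
    have h1 := (htg i j hij h).1
    have h2 := (htg j i hij.symm (by rw [hs j i]; linarith)).1
    rw [hs j i] at h2
    linarith
  have hd : ∀ i j, G.Adj i j → w i j ≤ γ i + γ j := by
    intro i j hij
    rcases le_or_gt (α i j + α j i) (w i j) with h | h
    · exact (htight' i j hij h).ge
    · have h1 := (hlo i j hij h).1
      have h2 := (hlo j i hij.symm (by rw [hs j i]; linarith)).1
      linarith
  have hbest : ∀ i j, G.Adj i j → 0 < γ i → offer w α j i = γ i → γ i + γ j = w i j := by
    intro i j hij hp he
    refine htight' i j hij ?_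
    by_contra hc
    push Not at hc
    have := (hlo i j hij hc).2 (by linarith)
    linarith
  -- the only tight edge at a node with positive earnings is solid
  have hsolid : ∀ i j, G.Adj i j → γ i + γ j = w i j → 0 < γ i →
      (∀ k, G.Adj i k → k ≠ j → γ i + γ k ≠ w i k) → α i j + α j i < w i j := by
    intro i j hij ht hp hno
    have h1 := htight i j hij ht
    refine lt_of_le_of_ne h1 fun he => ?_
    have h2 := (htg i j hij h1).1
    have h3 : γ i = α i j := by linarith
    obtain ⟨k, hk, hkj, hke⟩ := hαa i j hij (by linarith)
    exact hno k hk hkj (hbest i k hk hp (by linarith))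
  -- a solid edge gives the strictly best offer
  have hstrict : ∀ i j k, G.Adj i j → α i j + α j i < w i j → G.Adj i k → k ≠ j →
      offer w α k i < offer w α j i := by
    intro i j k hij h hik hkj
    have h1 := hαm i j k hij hik hkj
    have h2 := htg i j hij h.le
    linarith
  have hN := core_empty G w ⟨hs, hwp⟩ Mstar hM hopt huniq γ hγ0 hd (by
    intro i j k hij hp ⟨hjk, hnM, ht⟩
    by_contra hno
    push Not at hno
    have hadj := hM.subset i j hij
    have hno' : ∀ l, G.Adj i l → l ≠ j → γ i + γ l ≠ w i l := fun l hl hlj =>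
      hno l hl fun h => hlj (hM.unique _ _ _ h hij)
    have hti : γ i + γ j = w i j := by
      obtain ⟨l, hl, he⟩ := hγa i hp
      have := hbest i l hl hp he
      by_cases hlj : l = j
      · rw [← hlj]
        exact this
      · exact absurd this (hno' l hl hlj)
    have hso := hsolid i j hadj hti hp hno'
    have hki : k ≠ i := by
      rintro rfl
      exact hnM (hM.symm _ _ hij)
    have h1 := hstrict j i k hadj.symm (by rw [hs j i]; linarith) hjk hki
    have h2 := (htg j k hjk (htight j k hjk ht)).2
    have h3 := hγm j i hadj.symm
    linarith)
  have hmatch : ∀ i, 0 < γ i → ∃ j, Mstar i j ∧ α i j + α j i < w i j := by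
    intro i hp
    obtain ⟨j, hj, he⟩ := hγa i hp
    have ht := hbest i j hj hp he
    have hm : Mstar i j := by
      by_contra hm
      exact hN i j hj hm ht
    exact ⟨j, hm, hsolid i j hj ht hp fun k hk hkj =>
      hN i k hk fun h => hkj (hM.unique _ _ _ h hm)⟩
  have hMsol : ∀ i j, Mstar i j → α i j + α j i < w i j := by
    intro i j hij
    have hadj := hM.subset i j hij
    have h1 := hd i j hadj
    have h2 := hwp i j hadj
    by_cases hp : 0 < γ i
    · obtain ⟨k, hk, h⟩ := hmatch i hp
      rwa [hM.unique _ _ _ hk hij] at h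
    · obtain ⟨k, hk, h⟩ := hmatch j (by linarith)
      rw [hM.unique _ _ _ hk (hM.symm _ _ hij), hs j i] at h
      linarith
  refine ⟨⟨hM, ?_, ?_⟩, ⟨hM, hγ0, ?_, ?_⟩, ?_, ?_⟩
  · rintro i ⟨k, hk, hpos⟩
    obtain ⟨j, hj, h⟩ := hmatch i (hpos.trans_le (hγm i k hk))
    exact ⟨j, hj, fun l hl hlj => hstrict i j l (hM.subset _ _ hj) h hl hlj⟩
  · intro i hz j hij
    have hz' : γ i = 0 := hz
    have hadj := hM.subset i j hij
    have h1 := hMsol i j hij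
    have h2 := (htg i j hadj h1.le).1
    have h3 := hval i j hadj
    linarith
  · intro i j hij
    exact htight' i j (hM.subset _ _ hij) (hMsol i j hij).le
  · intro i hno
    by_contra hne
    obtain ⟨j, hj, _⟩ := hmatch i (lt_of_le_of_ne (hγ0 i) (Ne.symm hne))
    exact hno j hj
  · intro i j hij _
    exact hd i j hij
  · have hba : ∀ i j, Mstar i j → bestAlt G w γ i j = α i j := by
      intro i j hij
      rw [← hfp i j (hM.subset _ _ hij)]
      unfold bestAlt upd
      refine fmax_congr _ _ _ fun k hk => ?_
      rw [Finset.mem_erase] at hk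
      have hik : G.Adj i k := by simpa using hk.2
      have hl : w i k < α i k + α k i := by
        by_contra hc
        push Not at hc
        exact hN i k hik (fun h => hk.1 (hM.unique _ _ _ h hij)) (htight' i k hik hc)
      have h1 := (hlo k i hik.symm (by rw [hs k i]; linarith)).1
      rw [offer_loose w α hs i k hl.le, h1]
    intro i j hij
    have hadj := hM.subset i j hij
    have h := hMsol i j hij
    rw [hba i j hij, hba j i (hM.symm _ _ hij), (htg i j hadj h.le).1,
      (htg j i hadj.symm (by rw [hs j i]; linarith)).1, hs j i]
    ring
end EN
end

section
/- For any exchange network G, if α is a fixed point of the natural dynamics update operator with earnings vector γ, then the balance property holds at every edge: for all (i,j)∈E, γ_i − max_{k∈∂i∖j}(w_{ik}−γ_k)_+ = γ_j − max_{l∈∂j∖i}(w_{jl}−γ_l)_+, and both sides of this equation are nonnegative. -/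
namespace EN

open Finset

variable {V : Type*}

variable [Fintype V] [DecidableEq V]

theorem aux_le_fmax {V : Type*} [Fintype V] (s : Finset V) (f : V → ℝ)
    (k : V) (hk : k ∈ s) : f k ≤ fmax s f := by
  have h : f k = ⨆ _ : k ∈ s, f k := by
    haveI : Nonempty (k ∈ s) := ⟨hk⟩
    rw [ciSup_const]
  unfold fmax
  rw [h]
  exact le_ciSup (f := fun k => ⨆ _ : k ∈ s, f k) (Set.finite_range _).bddAbove k

theorem aux_fmax_le {V : Type*} [Fintype V] (s : Finset V) (f : V → ℝ) (c : ℝ)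
    (hc : 0 ≤ c) (h : ∀ k ∈ s, f k ≤ c) : fmax s f ≤ c := by
  unfold fmax
  exact Real.iSup_le (fun k => Real.iSup_le (fun hk => h k hk) hc) hc

theorem aux_fmax_congr {V : Type*} [Fintype V] (s : Finset V) (f g : V → ℝ)
    (h : ∀ k ∈ s, f k = g k) : fmax s f = fmax s g := by
  unfold fmax
  exact iSup_congr fun k => iSup_congr fun hk => h k hk

theorem aux_offer_nonneg {V : Type*} (w α : V → V → ℝ) (i j : V) (h : 0 ≤ α j i) :
    0 ≤ offer w α i j := by
  unfold offer pos
  rcases max_cases (w i j - α i j) 0 with h1 | h1 <;>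
  rcases max_cases (w i j - α i j - α j i) 0 with h2 | h2 <;> linarith

theorem aux_earn {V : Type*} [Fintype V] [DecidableEq V] (G : SimpleGraph V)
    [DecidableRel G.Adj] (w : V → V → ℝ) (hw : GoodW G w)
    (α : V → V → ℝ) (hval : ValidMsg G α) (hfp : IsFixedPt G w α)
    (i j : V) (hij : G.Adj i j) :
    earn G w α i = α i j + (1 / 2) * pos (w i j - α i j - α j i) := by
  have e : earn G w α i = max (α i j) (offer w α j i) := by
    apply le_antisymm
    · apply aux_fmax_le
      · exact le_max_of_le_left (hval i j hij)
      · intro k hk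
        by_cases hkj : k = j
        · subst hkj; exact le_max_right _ _
        · apply le_max_of_le_left
          rw [← hfp i j hij]
          exact aux_le_fmax _ (fun k => offer w α k i) k (Finset.mem_erase.2 ⟨hkj, hk⟩)
    · have hj : offer w α j i ≤ earn G w α i :=
        aux_le_fmax _ (fun k => offer w α k i) j (by simpa using hij)
      apply max_le _ hj
      rw [← hfp i j hij]
      apply aux_fmax_le
      · exact (aux_offer_nonneg w α j i (hval i j hij)).trans hj
      · intro k hk
        exact aux_le_fmax _ (fun k => offer w α k i) k (Finset.mem_of_mem_erase hk)
  rw [e]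
  have a0 := hval i j hij
  have b0 := hval j i hij.symm
  unfold offer pos
  rw [hw.1 j i]
  rcases max_cases (w i j - α j i) 0 with h1 | h1 <;>
  rcases max_cases (w i j - α j i - α i j) 0 with h2 | h2 <;>
  rcases max_cases (w i j - α i j - α j i) 0 with h3 | h3 <;>
  rw [h1.1, h2.1, h3.1] <;>
  first
  | (exfalso; linarith)
  | (rw [max_eq_left (by linarith)]; linarith)
  | (rw [max_eq_right (by linarith)]; linarith)

theorem aux_bestAlt {V : Type*} [Fintype V] [DecidableEq V] (G : SimpleGraph V)
    [DecidableRel G.Adj] (w : V → V → ℝ) (hw : GoodW G w)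
    (α : V → V → ℝ) (hval : ValidMsg G α) (hfp : IsFixedPt G w α)
    (i j : V) (hij : G.Adj i j) :
    bestAlt G w (earn G w α) i j = α i j := by
  rw [← hfp i j hij]
  apply aux_fmax_congr
  intro k hk
  have hik : G.Adj i k := by simpa using Finset.mem_of_mem_erase hk
  have a0 := hval i k hik
  have b0 := hval k i hik.symm
  simp only [aux_earn G w hw α hval hfp k i hik.symm]
  unfold offer pos
  rw [hw.1 i k]
  rcases max_cases (w k i - α k i - α i k) 0 with h1 | h1 <;>
  rcases max_cases (w k i - α k i) 0 with h2 | h2 <;>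
  rw [h1.1, h2.1] <;>
  first
  | (exfalso; linarith)
  | (rw [max_eq_left (by linarith)]; linarith)
  | (rw [max_eq_right (by linarith)]; linarith)

/-- At any fixed point of the natural dynamics, the balance property
holds at every edge, with both sides nonnegative. -/
theorem fixedPoint_balance_everywhere
    {V : Type*} [Fintype V] [DecidableEq V] (G : SimpleGraph V) [DecidableRel G.Adj]
    (w : V → V → ℝ) (hw : GoodW G w)
    (α : V → V → ℝ) (hval : ValidMsg G α) (hfp : IsFixedPt G w α) :
    ∀ i j, G.Adj i j →
      earn G w α i - bestAlt G w (earn G w α) i j =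
        earn G w α j - bestAlt G w (earn G w α) j i ∧
      0 ≤ earn G w α i - bestAlt G w (earn G w α) i j ∧
      0 ≤ earn G w α j - bestAlt G w (earn G w α) j i := by
  intro i j hij
  rw [aux_bestAlt G w hw α hval hfp i j hij, aux_bestAlt G w hw α hval hfp j i hij.symm,
    aux_earn G w hw α hval hfp i j hij, aux_earn G w hw α hval hfp j i hij.symm]
  have hs : w j i - α j i - α i j = w i j - α i j - α j i := by rw [hw.1 j i]; ring
  have hp : 0 ≤ pos (w i j - α i j - α j i) := le_max_right _ _
  rw [hs]
  refine ⟨by ring, by linarith, by linarith⟩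

end EN
end
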